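/- Let p ∈ (0,1) and let A, B be n×n Hermitian (or real symmetric) matrices with eigenvalues λ_1(A),…,λ_n(A) and λ_1(B),…,λ_n(B), and let λ_1(A−B),…,λ_n(A−B) be the eigenvalues of A−B. Then for every t ∈ ℝ, | Σ_{i=1}^n (t − λ_i(A))_+^p − Σ_{i=1}^n (t − λ_i(B))_+^p | ≤ Σ_{i=1}^n | λ_i(A−B) |^p. Furthermore, with C_p = √π (p+1) Γ((p+1)/2) / Γ(1 + p/2), one has d(μ_A, μ_B) ≤ (C_p/n) ‖A−B‖_{ℓ^p}^p, i.e. for every z ∈ 𝒦, | g_{μ_A}(z) − g_{μ_B}(z) | ≤ (C_p/n) ‖A−B‖_{ℓ^p}^p. -/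

import Mathlib

open MeasureTheory Filter Topology

noncomputable section

variable {𝕜 : Type*} [RCLike 𝕜]

/-- The space `H_n^(β)` of self-adjoint `n × n` matrices over `𝕜`. -/
abbrev HermMat (𝕜 : Type*) [RCLike 𝕜] (n : ℕ) := selfAdjoint (Matrix (Fin n) (Fin n) 𝕜)

def hermEntry {n : ℕ} (A : HermMat 𝕜 n) (i j : Fin n) : 𝕜 :=
  (A : Matrix (Fin n) (Fin n) 𝕜) i j

lemma herm_isHermitian {n : ℕ} (A : HermMat 𝕜 n) :
    (A : Matrix (Fin n) (Fin n) 𝕜).IsHermitian := by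
  simpa [Matrix.IsHermitian, ← Matrix.star_eq_conjTranspose] using A.2.star_eq

/-- The eigenvalues of a self-adjoint matrix. -/
def eigs {n : ℕ} (A : HermMat 𝕜 n) : Fin n → ℝ := (herm_isHermitian A).eigenvalues

/-- The empirical spectral measure `μ_A = (1/n) ∑ δ_{λ_i}`. -/
def specMeasure {n : ℕ} (A : HermMat 𝕜 n) : Measure ℝ :=
  ((n : ENNReal))⁻¹ • ∑ i : Fin n, Measure.dirac (eigs A i)

/-- `‖Y‖_{ℓ^p}^p = ∑_{i,j} ‖Y_{i,j}‖^p`. -/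
def matLpNormPow (p : ℝ) {n : ℕ} (A : HermMat 𝕜 n) : ℝ :=
  ∑ i, ∑ j, ‖hermEntry A i j‖ ^ p

/-- The Stieltjes transform `g_μ(z) = ∫ dμ(t)/(z - t)`. -/
def stieltjesT (μ : Measure ℝ) (z : ℂ) : ℂ := ∫ t, (z - (t : ℂ))⁻¹ ∂μ

/-- The constant `C_p = √π (p+1) Γ((p+1)/2) / Γ(1+p/2)`. -/
def Cp (p : ℝ) : ℝ :=
  Real.sqrt Real.pi * (p + 1) * Real.Gamma ((p + 1) / 2) / Real.Gamma (1 + p / 2)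

/-!
For positive semidefinite `M`, write `M (t + M)⁻¹ = 1 - t (t + M)⁻¹`. Inversion is operator
antitone, so `tr M (t + M)⁻¹` is monotone and subadditive in `M`; averaging over `t` gives the same
for `tr M ^ p`, `0 < p ≤ 1`. If `M ≤ N + P` are Hermitian then `M ≤ N₊ + P₊`, and compressing to
the positive spectral subspace of `M` gives `tr M₊ ^ p ≤ tr N₊ ^ p + tr P₊ ^ p`, which is applied to
`t - A = (t - B) + (B - A)`.

The resolvent `(z - l)⁻¹` is `-(p + 1) ∫ (t - l)₊ ^ p (t - z) ^ (-(p + 2)) dt`, and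
`(p + 1) ∫ |t - z| ^ (-(p + 2)) dt = C_p / (Im z) ^ (p + 1)`. Hence a bound on the differences of
the sums of truncated powers, uniform in `t`, bounds the difference of Stieltjes transforms.
Finally `∑ |λ_i| ^ p ≤ ∑ |Y_{j,k}| ^ p`: each diagonal entry of `|Y| ^ p = (Y²) ^ (p / 2)` is at
most `(Y²)_{j,j} ^ (p / 2) = (∑ |Y_{j,k}|²) ^ (p / 2)` by Jensen, and `x ^ (p / 2)` is subadditive.
-/

lemma rpow_sum_le_sum_rpow {ι : Type*} {s : Finset ι} {q : ℝ} (hq₀ : 0 < q) (hq₁ : q ≤ 1)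
    {f : ι → ℝ} (hf : ∀ i ∈ s, 0 ≤ f i) : (∑ i ∈ s, f i) ^ q ≤ ∑ i ∈ s, f i ^ q :=
  Finset.le_sum_of_subadditive_on_pred (· ^ q) (0 ≤ ·) (by simp [Real.zero_rpow hq₀.ne'])
    (fun _ _ hx hy => Real.rpow_add_le_add_rpow hx hy hq₀.le hq₁) (fun _ _ => add_nonneg) f hf

lemma sq_rpow_half {x : ℝ} (hx : 0 ≤ x) (p : ℝ) : (x ^ 2) ^ (p / 2) = x ^ p := by
  rw [← Real.rpow_natCast_mul hx]
  congr 1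
  push_cast
  ring

section TraceFunctional

open Matrix
open scoped ComplexOrder MatrixOrder

variable {ι : Type*} [Fintype ι] {M N P : Matrix ι ι 𝕜} {p : ℝ}

lemma re_trace_mono (h : M ≤ N) : RCLike.re M.trace ≤ RCLike.re N.trace :=
  (RCLike.le_iff_re_im.1 ((tracePositiveLinearMap ι 𝕜 𝕜).monotone' h)).1

lemma re_trace_mul_mono (hP : 0 ≤ P) (h : M ≤ N) :
    RCLike.re (P * M).trace ≤ RCLike.re (P * N).trace := by
  classical
  obtain ⟨S, rfl⟩ := CStarAlgebra.nonneg_iff_eq_star_mul_self.1 hP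
  rw [← trace_mul_cycle S M, ← trace_mul_cycle S N]
  exact re_trace_mono (star_right_conjugate_le_conjugate h S)

variable [DecidableEq ι]

/-- The trace functional `Re tr f(M)` of the continuous functional calculus, which for a Hermitian
matrix `M` is the sum of `f` over the eigenvalues. -/
def cfcTrace (f : ℝ → ℝ) (M : Matrix ι ι 𝕜) : ℝ := RCLike.re (cfc f M).trace

lemma continuousOn_spectrum (f : ℝ → ℝ) (M : Matrix ι ι 𝕜) : ContinuousOn f (spectrum ℝ M) :=
  M.finite_real_spectrum.continuousOn f

lemma cfcTrace_eq_sum_eigenvalues (f : ℝ → ℝ) (hM : M.IsHermitian) :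
    cfcTrace f M = ∑ i, f (hM.eigenvalues i) := by
  rw [cfcTrace, hM.cfc_eq, IsHermitian.cfc, Unitary.conjStarAlgAut_apply, trace_mul_cycle,
    Unitary.coe_star_mul_self, one_mul, trace_diagonal]
  simp

lemma cfcTrace_mono {f g : ℝ → ℝ} (h : ∀ x ∈ spectrum ℝ M, f x ≤ g x) :
    cfcTrace f M ≤ cfcTrace g M :=
  re_trace_mono <| cfc_mono h (continuousOn_spectrum f M) (continuousOn_spectrum g M)

lemma cfcTrace_cfc (f g : ℝ → ℝ) (hM : IsSelfAdjoint M) :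
    cfcTrace f (cfc g M) = cfcTrace (fun x => f (g x)) M :=
  congrArg (fun X => RCLike.re X.trace) (cfc_comp' f g M
    ((M.finite_real_spectrum.image g).continuousOn f) (continuousOn_spectrum g M) hM).symm

lemma cfcTrace_conjTranspose_mul_self (f : ℝ → ℝ) (S : Matrix ι ι 𝕜) :
    cfcTrace f (Sᴴ * S) = cfcTrace f (S * Sᴴ) := by
  rw [cfcTrace_eq_sum_eigenvalues f (isHermitian_conjTranspose_mul_self S),
    cfcTrace_eq_sum_eigenvalues f (isHermitian_mul_conjTranspose_self S),
    (IsHermitian.eigenvalues_eq_eigenvalues_iff _ _).2 (charpoly_mul_comm Sᴴ S)]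

lemma inv_anti_of_posDef (hM : M.PosDef) (h : M ≤ N) : N⁻¹ ≤ M⁻¹ := by
  have hN : N.PosDef := by simpa using hM.add_posSemidef (le_iff.1 h)
  have := hM.isUnit.invertible
  have := hN.isUnit.invertible
  have := hM.inv.isUnit.invertible
  -- Both inequalities say that the block matrix `[N, 1; 1, M⁻¹]` is positive semidefinite.
  have schur := (hN.fromBlocks₁₁ 1 M⁻¹).symm.trans (hM.inv.fromBlocks₂₂ N 1)
  simp only [conjTranspose_one, one_mul, mul_one, inv_inv_of_invertible] at schur
  exact schur.2 h

lemma posDef_algebraMap_add {t : ℝ} (ht : 0 < t) (hM : 0 ≤ M) :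
    (algebraMap ℝ (Matrix ι ι 𝕜) t + M).PosDef := by
  rw [Algebra.algebraMap_eq_smul_one]
  exact (PosDef.one.smul ht).add_posSemidef hM.posSemidef

lemma cfc_div_add_eq_mul_inv {t : ℝ} (ht : 0 < t) (hM : 0 ≤ M) :
    cfc (fun x : ℝ => x / (t + x)) M = M * (algebraMap ℝ _ t + M)⁻¹ := by
  have hsa : IsSelfAdjoint M := hM.posSemidef.isHermitian
  have := (posDef_algebraMap_add ht hM).isUnit.invertible
  have key : cfc (fun x : ℝ => x / (t + x)) M * (algebraMap ℝ _ t + M) = M := by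
    have hadd := cfc_const_add t (fun x => x) M
    rw [cfc_id' ℝ M] at hadd
    rw [← hadd, ← cfc_mul _ _ _ (continuousOn_spectrum _ M) (continuousOn_spectrum _ M)]
    conv_rhs => rw [← cfc_id' ℝ M]
    refine cfc_congr fun x hx => div_mul_cancel₀ x ?_
    have := spectrum_nonneg_of_nonneg hM hx
    positivity
  rw [← mul_inv_cancel_right_of_invertible (algebraMap ℝ _ t + M) (cfc _ M), key]

lemma cfcTrace_div_add_add_le {t : ℝ} (ht : 0 < t) (hM : 0 ≤ M) (hN : 0 ≤ N) :
    cfcTrace (fun x => x / (t + x)) (M + N) ≤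
      cfcTrace (fun x => x / (t + x)) M + cfcTrace (fun x => x / (t + x)) N := by
  simp only [cfcTrace, cfc_div_add_eq_mul_inv ht, hM, hN, add_nonneg, add_mul, trace_add, map_add]
  refine add_le_add ?_ ?_
  · refine re_trace_mul_mono hM (inv_anti_of_posDef (posDef_algebraMap_add ht hM) ?_)
    gcongr
    exact le_add_of_nonneg_right hN
  · refine re_trace_mul_mono hN (inv_anti_of_posDef (posDef_algebraMap_add ht hN) ?_)
    gcongr
    exact le_add_of_nonneg_left hM

lemma cfcTrace_div_add_mono {t : ℝ} (ht : 0 < t) (hM : 0 ≤ M) (h : M ≤ N) :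
    cfcTrace (fun x => x / (t + x)) M ≤ cfcTrace (fun x => x / (t + x)) N := by
  have mul_inv_eq {X : Matrix ι ι 𝕜} (hX : 0 ≤ X) :
      X * (algebraMap ℝ _ t + X)⁻¹ = 1 - t • (algebraMap ℝ _ t + X)⁻¹ := by
    have := (posDef_algebraMap_add ht hX).isUnit.invertible
    rw [mul_inv_eq_iff_eq_mul_of_invertible, sub_mul, smul_mul_assoc, inv_mul_of_invertible,
      Algebra.algebraMap_eq_smul_one]
    simp
  have hN := hM.trans h
  rw [cfcTrace, cfcTrace, cfc_div_add_eq_mul_inv ht hM, cfc_div_add_eq_mul_inv ht hN,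
    mul_inv_eq hM, mul_inv_eq hN]
  have := inv_anti_of_posDef (posDef_algebraMap_add ht hM) (N := algebraMap ℝ _ t + N) (by gcongr)
  exact re_trace_mono (by gcongr)

lemma exists_measure_cfcTrace_rpow_eq_integral (hp : p ∈ Set.Ioo 0 1) :
    ∃ μ : Measure ℝ, ∀ M : Matrix ι ι 𝕜, 0 ≤ M →
      IntegrableOn (fun t => t ^ (p - 1) * cfcTrace (fun x => x / (t + x)) M) (Set.Ioi 0) μ ∧
      cfcTrace (· ^ p) M =
        ∫ t in Set.Ioi 0, t ^ (p - 1) * cfcTrace (fun x => x / (t + x)) M ∂μ := by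
  obtain ⟨μ, hμ⟩ := Real.exists_measure_rpow_eq_integral_rpowIntegrand₀₁ hp
  refine ⟨μ, fun M hM => ?_⟩
  have hrep := fun i => hμ _ (hM.posSemidef.eigenvalues_nonneg i)
  have expand : Set.EqOn
      (fun t => ∑ i, Real.rpowIntegrand₀₁ p t (hM.posSemidef.isHermitian.eigenvalues i))
      (fun t => t ^ (p - 1) * cfcTrace (fun x => x / (t + x)) M) (Set.Ioi 0) := fun t ht => by
    simp only [cfcTrace_eq_sum_eigenvalues _ hM.posSemidef.isHermitian, Finset.mul_sum]
    refine Finset.sum_congr rfl fun i _ => ?_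
    rw [Real.rpowIntegrand₀₁_eq_pow_div hp (le_of_lt ht) (hM.posSemidef.eigenvalues_nonneg i),
      mul_div_assoc]
  refine ⟨IntegrableOn.congr_fun (integrable_finsetSum _ fun i _ => (hrep i).1) expand
    measurableSet_Ioi, ?_⟩
  rw [← setIntegral_congr_fun measurableSet_Ioi expand, integral_finsetSum _ fun i _ => (hrep i).1,
    cfcTrace_eq_sum_eigenvalues _ hM.posSemidef.isHermitian]
  exact Finset.sum_congr rfl fun i _ => (hrep i).2

lemma cfcTrace_rpow_one (hM : IsSelfAdjoint M) : cfcTrace (· ^ (1 : ℝ)) M = RCLike.re M.trace := by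
  simp only [cfcTrace, Real.rpow_one, cfc_id' ℝ M]

lemma cfcTrace_rpow_mono (hp₀ : 0 < p) (hp₁ : p ≤ 1) (hM : 0 ≤ M) (h : M ≤ N) :
    cfcTrace (· ^ p) M ≤ cfcTrace (· ^ p) N := by
  have hN := hM.trans h
  obtain rfl | hp₁ := hp₁.eq_or_lt
  · rw [cfcTrace_rpow_one (.of_nonneg hM), cfcTrace_rpow_one (.of_nonneg hN)]
    exact re_trace_mono h
  obtain ⟨μ, hμ⟩ := exists_measure_cfcTrace_rpow_eq_integral (𝕜 := 𝕜) (ι := ι) ⟨hp₀, hp₁⟩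
  rw [(hμ M hM).2, (hμ N hN).2]
  refine setIntegral_mono_on (hμ M hM).1 (hμ N hN).1 measurableSet_Ioi fun t ht => ?_
  exact mul_le_mul_of_nonneg_left (cfcTrace_div_add_mono ht hM h) (Real.rpow_nonneg (le_of_lt ht) _)

lemma cfcTrace_rpow_add_le (hp₀ : 0 < p) (hp₁ : p ≤ 1) (hM : 0 ≤ M) (hN : 0 ≤ N) :
    cfcTrace (· ^ p) (M + N) ≤ cfcTrace (· ^ p) M + cfcTrace (· ^ p) N := by
  have hMN := add_nonneg hM hN
  obtain rfl | hp₁ := hp₁.eq_or_lt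
  · rw [cfcTrace_rpow_one (.of_nonneg hM), cfcTrace_rpow_one (.of_nonneg hN),
      cfcTrace_rpow_one (.of_nonneg hMN), trace_add, map_add]
  obtain ⟨μ, hμ⟩ := exists_measure_cfcTrace_rpow_eq_integral (𝕜 := 𝕜) (ι := ι) ⟨hp₀, hp₁⟩
  rw [(hμ M hM).2, (hμ N hN).2, (hμ _ hMN).2, ← integral_add (hμ M hM).1 (hμ N hN).1]
  refine setIntegral_mono_on (hμ _ hMN).1 ((hμ M hM).1.add (hμ N hN).1) measurableSet_Ioi
    fun t ht => ?_
  rw [← mul_add]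
  exact mul_le_mul_of_nonneg_left (cfcTrace_div_add_add_le ht hM hN)
    (Real.rpow_nonneg (le_of_lt ht) _)

-- With `P = Sᴴ S`, the matrix `C P Cᴴ` has the same spectrum as `S (Cᴴ C) Sᴴ ≤ S Sᴴ`.
lemma cfcTrace_rpow_conj_le (hp₀ : 0 < p) (hp₁ : p ≤ 1) {C : Matrix ι ι 𝕜}
    (hC : star C * C ≤ 1) (hP : 0 ≤ P) :
    cfcTrace (· ^ p) (C * P * star C) ≤ cfcTrace (· ^ p) P := by
  obtain ⟨S, rfl⟩ := CStarAlgebra.nonneg_iff_eq_star_mul_self.1 hP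
  have hS : S * (star C * C) * star S ≤ S * star S := by
    simpa using star_right_conjugate_le_conjugate hC S
  calc cfcTrace (· ^ p) (C * (star S * S) * star C)
      = cfcTrace (· ^ p) (star (S * star C) * (S * star C)) := by simp [mul_assoc]
    _ = cfcTrace (· ^ p) (S * (star C * C) * star S) := by
      rw [star_eq_conjTranspose, cfcTrace_conjTranspose_mul_self]
      simp [mul_assoc, star_eq_conjTranspose]
    _ ≤ cfcTrace (· ^ p) (S * star S) :=
      cfcTrace_rpow_mono hp₀ hp₁ (star_right_conjugate_nonneg (star_mul_self_nonneg C) S) hS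
    _ = cfcTrace (· ^ p) (star S * S) := (cfcTrace_conjTranspose_mul_self _ S).symm

lemma cfcTrace_max_rpow_le_of_le (hp₀ : 0 < p) (hp₁ : p ≤ 1) (hM : IsSelfAdjoint M)
    (h : M ≤ P) (hP : 0 ≤ P) : cfcTrace (fun x => max x 0 ^ p) M ≤ cfcTrace (· ^ p) P := by
  -- Compressing to the positive spectral subspace of `M` turns `M` into its positive part, so that
  -- monotonicity on nonnegative matrices applies.
  let ind : ℝ → ℝ := fun x => if 0 < x then 1 else 0
  set E : Matrix ι ι 𝕜 := cfc ind M
  have hcont (f : ℝ → ℝ) : ContinuousOn f (spectrum ℝ M) := continuousOn_spectrum f M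
  have hE : star E = E := IsSelfAdjoint.cfc
  have hE_contr : star E * E ≤ 1 := by
    rw [hE, ← cfc_mul _ _ _ (hcont _) (hcont _)]
    refine cfc_le_one _ _ fun x _ => ?_
    by_cases hx : 0 < x <;> simp [ind, hx]
  have hcompress : E * M * star E = cfc (fun x : ℝ => max x 0) M := by
    have hEM : E * M = cfc (fun x => ind x * x) M := by
      rw [cfc_mul _ _ _ (hcont _) (hcont _), cfc_id' ℝ M]
    rw [hE, hEM, ← cfc_mul _ _ _ (hcont _) (hcont _)]
    refine cfc_congr fun x _ => ?_
    obtain hx | hx := lt_or_ge 0 x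
    · simp [ind, hx, hx.le]
    · simp [ind, hx]
  rw [← cfcTrace_cfc (· ^ p) (fun x => max x 0) hM, ← hcompress]
  refine (cfcTrace_rpow_mono hp₀ hp₁ ?_ (star_right_conjugate_le_conjugate h E)).trans
    (cfcTrace_rpow_conj_le hp₀ hp₁ hE_contr hP)
  rw [hcompress]
  exact cfc_nonneg fun x _ => le_max_right x 0

lemma le_cfc_max_zero (hM : IsSelfAdjoint M) : M ≤ cfc (fun x : ℝ => max x 0) M := by
  conv_lhs => rw [← cfc_id' ℝ M]
  exact cfc_mono fun x _ => le_max_left x 0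

lemma cfcTrace_max_rpow_le_add (hp₀ : 0 < p) (hp₁ : p ≤ 1) (hM : IsSelfAdjoint M)
    (hN : IsSelfAdjoint N) (hP : IsSelfAdjoint P) (h : M ≤ N + P) :
    cfcTrace (fun x => max x 0 ^ p) M ≤
      cfcTrace (fun x => max x 0 ^ p) N + cfcTrace (fun x => max x 0 ^ p) P := by
  have hpos (X : Matrix ι ι 𝕜) : 0 ≤ cfc (fun x : ℝ => max x 0) X :=
    cfc_nonneg fun x _ => le_max_right x 0
  rw [← cfcTrace_cfc (· ^ p) (fun x => max x 0) hN, ← cfcTrace_cfc (· ^ p) (fun x => max x 0) hP]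
  exact (cfcTrace_max_rpow_le_of_le hp₀ hp₁ hM
    (h.trans (add_le_add (le_cfc_max_zero hN) (le_cfc_max_zero hP)))
    (add_nonneg (hpos N) (hpos P))).trans (cfcTrace_rpow_add_le hp₀ hp₁ (hpos N) (hpos P))

lemma cfcTrace_comp_sub (f : ℝ → ℝ) (t : ℝ) (hM : IsSelfAdjoint M) :
    cfcTrace f (algebraMap ℝ _ t - M) = cfcTrace (fun x => f (t - x)) M := by
  rw [← cfcTrace_cfc f (fun x => t - x) hM, cfc_sub _ _ M, cfc_const t M hM, cfc_id' ℝ M]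

lemma cfcTrace_max_sub_rpow_le (hp₀ : 0 < p) (hp₁ : p ≤ 1) (t : ℝ) (hM : IsSelfAdjoint M)
    (hN : IsSelfAdjoint N) :
    cfcTrace (fun x => max (t - x) 0 ^ p) M ≤
      cfcTrace (fun x => max (t - x) 0 ^ p) N + cfcTrace (|·| ^ p) (N - M) := by
  have ht : IsSelfAdjoint (algebraMap ℝ (Matrix ι ι 𝕜) t) := .algebraMap _ (.all t)
  have split := cfcTrace_max_rpow_le_add hp₀ hp₁ (ht.sub hM) (ht.sub hN) (hN.sub hM) (by simp)
  rw [cfcTrace_comp_sub _ _ hM, cfcTrace_comp_sub _ _ hN] at split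
  refine split.trans (add_le_add_right (cfcTrace_mono fun x _ => ?_) _)
  gcongr
  exact max_le (le_abs_self x) (abs_nonneg x)

lemma abs_cfcTrace_max_sub_rpow_sub_le (hp₀ : 0 < p) (hp₁ : p ≤ 1) (t : ℝ)
    (hM : IsSelfAdjoint M) (hN : IsSelfAdjoint N) :
    |cfcTrace (fun x => max (t - x) 0 ^ p) M - cfcTrace (fun x => max (t - x) 0 ^ p) N| ≤
      cfcTrace (|·| ^ p) (M - N) := by
  have hswap : cfcTrace (|·| ^ p) (N - M) = cfcTrace (|·| ^ p) (M - N) := by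
    have := cfcTrace_comp_sub (|·| ^ p) 0 (hM.sub hN)
    simpa using this
  rw [abs_sub_le_iff, sub_le_iff_le_add', sub_le_iff_le_add', ← hswap]
  refine ⟨cfcTrace_max_sub_rpow_le hp₀ hp₁ t hM hN, ?_⟩
  exact hswap ▸ cfcTrace_max_sub_rpow_le hp₀ hp₁ t hN hM

lemma re_cfc_apply_self (f : ℝ → ℝ) (hM : M.IsHermitian) (j : ι) :
    RCLike.re (cfc f M j j) =
      ∑ i, ‖(hM.eigenvectorUnitary : Matrix ι ι 𝕜) j i‖ ^ 2 * f (hM.eigenvalues i) := by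
  rw [hM.cfc_eq, IsHermitian.cfc, Unitary.conjStarAlgAut_apply, mul_apply, map_sum]
  refine Finset.sum_congr rfl fun i _ => ?_
  rw [mul_diagonal, star_apply, mul_right_comm, RCLike.star_def, RCLike.mul_conj,
    ← RCLike.ofReal_pow, RCLike.re_ofReal_mul]
  exact congrArg (_ * ·) (RCLike.ofReal_re _)

lemma re_cfc_comp_apply_self_le {s : Set ℝ} {φ f : ℝ → ℝ} (hφ : ConcaveOn ℝ s φ)
    (hf : ∀ x, f x ∈ s) (hM : M.IsHermitian) (j : ι) :
    RCLike.re (cfc (fun x => φ (f x)) M j j) ≤ φ (RCLike.re (cfc f M j j)) := by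
  have hweights : ∑ i, ‖(hM.eigenvectorUnitary : Matrix ι ι 𝕜) j i‖ ^ 2 = 1 := by
    have hone := cfc_const_one ℝ M (ha := hM.isSelfAdjoint)
    simpa [hone] using (re_cfc_apply_self (fun _ => 1) hM j).symm
  rw [re_cfc_apply_self (fun x => φ (f x)) hM, re_cfc_apply_self f hM]
  exact hφ.le_map_sum (fun i _ => sq_nonneg _) hweights fun i _ => hf _

lemma re_cfc_sq_apply_self (hM : IsSelfAdjoint M) (j : ι) :
    RCLike.re (cfc (fun x : ℝ => x ^ 2) M j j) = ∑ k, ‖M j k‖ ^ 2 := by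
  have hsq : cfc (fun x : ℝ => x ^ 2) M = M * Mᴴ := by
    rw [cfc_pow_id M 2, pow_two, ← star_eq_conjTranspose, hM.star_eq]
  rw [hsq, mul_apply, map_sum]
  refine Finset.sum_congr rfl fun k _ => ?_
  rw [conjTranspose_apply, RCLike.star_def, RCLike.mul_conj]
  norm_cast

lemma re_cfc_abs_rpow_apply_self_le (hp₀ : 0 < p) (hp₂ : p ≤ 2) (hM : IsSelfAdjoint M) (j : ι) :
    RCLike.re (cfc (fun x : ℝ => |x| ^ p) M j j) ≤ ∑ k, ‖M j k‖ ^ p := by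
  calc RCLike.re (cfc (fun x : ℝ => |x| ^ p) M j j)
      = RCLike.re (cfc (fun x : ℝ => (x ^ 2) ^ (p / 2)) M j j) := by
        simp only [← sq_rpow_half (abs_nonneg _), sq_abs]
    _ ≤ (RCLike.re (cfc (fun x : ℝ => x ^ 2) M j j)) ^ (p / 2) :=
        re_cfc_comp_apply_self_le (Real.concaveOn_rpow (by positivity) (by linarith)) sq_nonneg hM j
    _ = (∑ k, ‖M j k‖ ^ 2) ^ (p / 2) := by rw [re_cfc_sq_apply_self hM]
    _ ≤ ∑ k, (‖M j k‖ ^ 2) ^ (p / 2) :=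
        rpow_sum_le_sum_rpow (by positivity) (by linarith) fun k _ => sq_nonneg _
    _ = ∑ k, ‖M j k‖ ^ p := by simp only [sq_rpow_half (norm_nonneg _)]

lemma cfcTrace_abs_rpow_le (hp₀ : 0 < p) (hp₂ : p ≤ 2) (hM : IsSelfAdjoint M) :
    cfcTrace (|·| ^ p) M ≤ ∑ j, ∑ k, ‖M j k‖ ^ p := by
  rw [cfcTrace, trace, map_sum]
  exact Finset.sum_le_sum fun j _ => re_cfc_abs_rpow_apply_self_le hp₀ hp₂ hM j

end TraceFunctional

section StieltjesKernel

variable {p s : ℝ} {z : ℂ}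

lemma integrable_one_add_sq_rpow_neg (hs : 1 / 2 < s) :
    Integrable fun t : ℝ => (1 + t ^ 2) ^ (-s) := by
  have := integrable_rpow_neg_one_add_norm_sq (E := ℝ) (μ := volume) (r := 2 * s)
    (by rw [Module.finrank_self, Nat.cast_one]; linarith)
  simpa [neg_div] using this

lemma integral_one_add_sq_rpow_neg (hs : 1 / 2 < s) :
    ∫ t : ℝ, (1 + t ^ 2) ^ (-s) = √Real.pi * Real.Gamma (s - 1 / 2) / Real.Gamma s := by
  have hs₀ : 0 < s := by linarith
  rw [eq_div_iff (Real.Gamma_pos_of_pos hs₀).ne']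
  -- Fubini for the Gamma integral representation of `(1 + t²)^(-s)`.
  let F (t u : ℝ) : ℝ := u ^ (s - 1) * Real.exp (-((1 + t ^ 2) * u))
  have integral_u (t : ℝ) : ∫ u in Set.Ioi 0, F t u = (1 + t ^ 2) ^ (-s) * Real.Gamma s := by
    rw [Real.integral_rpow_mul_exp_neg_mul_Ioi hs₀ (by positivity), one_div,
      Real.inv_rpow (by positivity), Real.rpow_neg (by positivity)]
  have F_eq (t u : ℝ) : F t u = u ^ (s - 1) * Real.exp (-u) * Real.exp (-u * t ^ 2) := by
    simp only [F]
    rw [mul_assoc, ← Real.exp_add]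
    congr 2
    ring
  have integral_t : ∀ u ∈ Set.Ioi (0 : ℝ),
      ∫ t, F t u = √Real.pi * (Real.exp (-u) * u ^ (s - 1 / 2 - 1)) := fun u hu => by
    simp only [F_eq]
    rw [integral_const_mul, integral_gaussian, Real.sqrt_div Real.pi_pos.le, Real.sqrt_eq_rpow u,
      show s - 1 / 2 - 1 = s - 1 - 1 / 2 by ring, Real.rpow_sub hu _ (1 / 2)]
    ring
  have hF : Integrable (Function.uncurry F) (volume.prod (volume.restrict (Set.Ioi 0))) := by
    refine (integrable_prod_iff' (by fun_prop)).2 ⟨?_, ?_⟩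
    · filter_upwards [ae_restrict_mem measurableSet_Ioi] with u hu
      simp only [Function.uncurry, F_eq]
      exact (integrable_exp_neg_mul_sq hu).const_mul _
    · refine IntegrableOn.congr_fun ((Real.GammaIntegral_convergent
        (s := s - 1 / 2) (by linarith)).const_mul √Real.pi) (fun u hu => ?_) measurableSet_Ioi
      have hF_nonneg (t : ℝ) : 0 ≤ F t u :=
        mul_nonneg (Real.rpow_nonneg (le_of_lt hu) _) (Real.exp_pos _).le
      simp only [← integral_t u hu, Function.uncurry, Real.norm_of_nonneg (hF_nonneg _)]
  calc (∫ t : ℝ, (1 + t ^ 2) ^ (-s)) * Real.Gamma s = ∫ t, ∫ u in Set.Ioi 0, F t u := by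
        simp only [integral_u, integral_mul_const]
    _ = ∫ u in Set.Ioi 0, ∫ t, F t u := integral_integral_swap hF
    _ = √Real.pi * Real.Gamma (s - 1 / 2) := by
        rw [setIntegral_congr_fun measurableSet_Ioi integral_t, integral_const_mul,
          ← Real.Gamma_eq_integral (by linarith)]

lemma norm_ofReal_sub_rpow_neg (hz : 0 < z.im) (s t : ℝ) :
    ‖(t : ℂ) - z‖ ^ (-s) = z.im ^ (-s) * (1 + ((t - z.re) / z.im) ^ 2) ^ (-(s / 2)) := by
  have hsq : ‖(t : ℂ) - z‖ ^ 2 = z.im ^ 2 * (1 + ((t - z.re) / z.im) ^ 2) := by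
    rw [Complex.sq_norm, Complex.normSq_apply, Complex.sub_re, Complex.sub_im, Complex.ofReal_re,
      Complex.ofReal_im]
    field_simp
    ring
  rw [← sq_rpow_half (norm_nonneg _), hsq, Real.mul_rpow (by positivity) (by positivity),
    sq_rpow_half hz.le, neg_div]

lemma integrable_norm_ofReal_sub_rpow_neg (hs : 1 < s) (hz : 0 < z.im) :
    Integrable fun t : ℝ => ‖(t : ℂ) - z‖ ^ (-s) := by
  simp only [norm_ofReal_sub_rpow_neg hz]
  exact (((integrable_one_add_sq_rpow_neg (by linarith)).comp_div hz.ne').comp_sub_right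
    z.re).const_mul _

lemma integral_norm_ofReal_sub_rpow_neg (hs : 1 < s) (hz : 0 < z.im) :
    ∫ t : ℝ, ‖(t : ℂ) - z‖ ^ (-s) =
      z.im ^ (1 - s) * (√Real.pi * Real.Gamma ((s - 1) / 2) / Real.Gamma (s / 2)) := by
  simp only [norm_ofReal_sub_rpow_neg hz]
  rw [integral_const_mul, integral_sub_right_eq_self (fun t => (1 + (t / z.im) ^ 2) ^ (-(s / 2))),
    Measure.integral_comp_div (fun t => (1 + t ^ 2) ^ (-(s / 2))), abs_of_pos hz,
    integral_one_add_sq_rpow_neg (by linarith), smul_eq_mul, ← mul_assoc,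
    ← Real.rpow_add_one hz.ne']
  ring_nf

/-- The kernel `t ↦ (t - z)^{-(p + 2)}` against which truncated powers `(t - l)₊ ^ p` integrate to
a multiple of the resolvent `(z - l)⁻¹`. -/
def stieltjesKernel (p : ℝ) (z : ℂ) (t : ℝ) : ℂ := ((t : ℂ) - z) ^ ((-(p + 2) : ℝ) : ℂ)

lemma ofReal_sub_mem_slitPlane (hz : z.im ≠ 0) (t : ℝ) : (t : ℂ) - z ∈ Complex.slitPlane :=
  Or.inr (by simpa using hz)

lemma norm_stieltjesKernel (p : ℝ) (z : ℂ) (t : ℝ) :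
    ‖stieltjesKernel p z t‖ = ‖(t : ℂ) - z‖ ^ (-(p + 2)) := Complex.norm_cpow_real _ _

lemma integral_norm_stieltjesKernel (hp : -1 < p) (hz : 0 < z.im) :
    (p + 1) * ∫ t, ‖stieltjesKernel p z t‖ = Cp p / z.im ^ (p + 1) := by
  simp only [norm_stieltjesKernel]
  rw [integral_norm_ofReal_sub_rpow_neg (by linarith) hz, Cp, show 1 - (p + 2) = -(p + 1) by ring,
    Real.rpow_neg hz.le]
  ring_nf

lemma im_le_norm_ofReal_sub (z : ℂ) (t : ℝ) : z.im ≤ ‖(t : ℂ) - z‖ := by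
  simpa using (neg_le_abs _).trans (Complex.abs_im_le_norm (t - z))

lemma max_sub_zero_le_mul_norm (hz : 0 < z.im) (l t : ℝ) :
    max (t - l) 0 ≤ (1 + ‖z - l‖ / z.im) * ‖(t : ℂ) - z‖ := by
  refine max_le ?_ (by positivity)
  have hnorm : ‖z - l‖ ≤ ‖z - l‖ / z.im * ‖(t : ℂ) - z‖ := by
    rw [div_mul_eq_mul_div, le_div_iff₀ hz]
    gcongr
    exact im_le_norm_ofReal_sub z t
  calc t - l ≤ ‖((t - l : ℝ) : ℂ)‖ := by
        rw [Complex.norm_real]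
        exact le_abs_self _
    _ = ‖((t : ℂ) - z) + (z - l)‖ := by simp
    _ ≤ ‖(t : ℂ) - z‖ + ‖z - l‖ := norm_add_le _ _
    _ ≤ (1 + ‖z - l‖ / z.im) * ‖(t : ℂ) - z‖ := by linarith

lemma integrable_max_sub_rpow_mul_stieltjesKernel (hp : 0 ≤ p) (hz : 0 < z.im) (l : ℝ) :
    Integrable fun t => ((max (t - l) 0 ^ p : ℝ) : ℂ) * stieltjesKernel p z t := by
  refine ((integrable_norm_ofReal_sub_rpow_neg one_lt_two hz).const_mul
    ((1 + ‖z - l‖ / z.im) ^ p)).mono' (by unfold stieltjesKernel; fun_prop)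
    (ae_of_all _ fun t => ?_)
  have hpos : 0 < ‖(t : ℂ) - z‖ := hz.trans_le (im_le_norm_ofReal_sub z t)
  rw [norm_mul, norm_stieltjesKernel, Complex.norm_real, Real.norm_of_nonneg (by positivity)]
  calc max (t - l) 0 ^ p * ‖(t : ℂ) - z‖ ^ (-(p + 2))
      ≤ ((1 + ‖z - l‖ / z.im) * ‖(t : ℂ) - z‖) ^ p * ‖(t : ℂ) - z‖ ^ (-(p + 2)) := by
        gcongr
        exact max_sub_zero_le_mul_norm hz l t
    _ = (1 + ‖z - l‖ / z.im) ^ p * ‖(t : ℂ) - z‖ ^ (-2 : ℝ) := by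
        rw [Real.mul_rpow (by positivity) hpos.le, mul_assoc, ← Real.rpow_add hpos]
        ring_nf

lemma ofReal_mul_cpow {r : ℝ} (hr : 0 ≤ r) (w s : ℂ) :
    ((r : ℂ) * w) ^ s = (r : ℂ) ^ s * w ^ s := by
  obtain rfl | hs := eq_or_ne s 0
  · simp
  obtain rfl | hw := eq_or_ne w 0
  · simp [hs]
  obtain rfl | hr := hr.eq_or_lt
  · simp [hs]
  have hr' : (r : ℂ) ≠ 0 := by exact_mod_cast hr.ne'
  rw [Complex.cpow_def_of_ne_zero (mul_ne_zero hr' hw), Complex.cpow_def_of_ne_zero hr',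
    Complex.cpow_def_of_ne_zero hw, Complex.log_ofReal_mul hr hw, add_mul, Complex.exp_add,
    Complex.ofReal_log hr.le]

lemma hasDerivAt_sub_rpow_mul_cpow (hp : 0 ≤ p) (hz : z.im ≠ 0) {l t : ℝ} (ht : l ≤ t) :
    HasDerivAt (fun t : ℝ => (((t - l) ^ (p + 1) : ℝ) : ℂ) * ((t : ℂ) - z) ^ ((-(p + 1) : ℝ) : ℂ))
      ((p + 1) * (l - z) * (((max (t - l) 0 ^ p : ℝ) : ℂ) * stieltjesKernel p z t)) t := by
  have hw := ofReal_sub_mem_slitPlane hz t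
  have hrpow : HasDerivAt (fun t : ℝ => (((t - l) ^ (p + 1) : ℝ) : ℂ))
      (((p + 1) * (t - l) ^ p : ℝ) : ℂ) t := by
    have := ((hasDerivAt_id t).sub_const l).rpow_const (p := p + 1) (Or.inr (by linarith))
    simpa using this.ofReal_comp
  have hcpow : HasDerivAt (fun t : ℝ => ((t : ℂ) - z) ^ ((-(p + 1) : ℝ) : ℂ))
      (((-(p + 1) : ℝ) : ℂ) * stieltjesKernel p z t) t := by
    have := (((hasDerivAt_id (t : ℂ)).sub_const z).cpow_const
      (c := ((-(p + 1) : ℝ) : ℂ)) hw).comp_ofReal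
    rw [stieltjesKernel, show ((-(p + 2) : ℝ) : ℂ) = ((-(p + 1) : ℝ) : ℂ) - 1 by push_cast; ring]
    simpa using this
  refine (hrpow.mul hcpow).congr_deriv ?_
  have hK : ((t : ℂ) - z) ^ ((-(p + 1) : ℝ) : ℂ) = stieltjesKernel p z t * (t - z) := by
    rw [stieltjesKernel, show ((-(p + 1) : ℝ) : ℂ) = ((-(p + 2) : ℝ) : ℂ) + 1 by push_cast; ring,
      Complex.cpow_add _ _ (Complex.slitPlane_ne_zero hw), Complex.cpow_one]
  rw [hK, Real.rpow_add_one' (by linarith) (by linarith), max_eq_left (by linarith)]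
  push_cast
  ring

lemma tendsto_sub_rpow_mul_cpow (z : ℂ) (l q : ℝ) :
    Tendsto (fun t : ℝ => (((t - l) ^ q : ℝ) : ℂ) * ((t : ℂ) - z) ^ ((-q : ℝ) : ℂ)) atTop
      (𝓝 1) := by
  have hbase : Tendsto (fun t : ℝ => 1 + (l - z) * (((t - l)⁻¹ : ℝ) : ℂ)) atTop (𝓝 1) := by
    have hinv : Tendsto (fun t : ℝ => (t - l)⁻¹) atTop (𝓝 0) :=
      tendsto_inv_atTop_zero.comp (tendsto_atTop_add_const_right _ (-l) tendsto_id)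
    simpa using ((Complex.continuous_ofReal.tendsto 0).comp hinv).const_mul (l - z) |>.const_add 1
  have hpow := (continuousAt_cpow_const (b := ((-q : ℝ) : ℂ))
    Complex.one_mem_slitPlane).tendsto.comp hbase
  rw [Complex.one_cpow] at hpow
  refine hpow.congr' ?_
  filter_upwards [eventually_gt_atTop l] with t ht
  have htl : 0 < t - l := sub_pos.2 ht
  have htl' : (t : ℂ) - l ≠ 0 := by exact_mod_cast htl.ne'
  have hfac : (t : ℂ) - z = ((t - l : ℝ) : ℂ) * (1 + (l - z) * (((t - l)⁻¹ : ℝ) : ℂ)) := by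
    push_cast
    field_simp
    ring
  rw [hfac, ofReal_mul_cpow htl.le, ← Complex.ofReal_cpow htl.le, ← mul_assoc,
    ← Complex.ofReal_mul, ← Real.rpow_add htl]
  simp

-- `(p + 1) (l - z) (t - l) ^ p (t - z) ^ (-(p + 2))` is the derivative of
-- `(t - l) ^ (p + 1) (t - z) ^ (-(p + 1))`, which runs from `0` at `l` to `1` at infinity.
lemma inv_sub_eq_integral_stieltjesKernel (hp : 0 < p) (hz : 0 < z.im) (l : ℝ) :
    (z - l)⁻¹ =
      -(p + 1) * ∫ t : ℝ, ((max (t - l) 0 ^ p : ℝ) : ℂ) * stieltjesKernel p z t := by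
  have hintegrable := integrable_max_sub_rpow_mul_stieltjesKernel hp.le hz l
  have hFTC := integral_Ioi_of_hasDerivAt_of_tendsto'
    (fun t ht => hasDerivAt_sub_rpow_mul_cpow hp.le hz.ne' ht)
    (hintegrable.const_mul _).integrableOn (tendsto_sub_rpow_mul_cpow z l (p + 1))
  rw [integral_const_mul, setIntegral_eq_integral_of_forall_compl_eq_zero, sub_self,
    Real.zero_rpow (by linarith), Complex.ofReal_zero, zero_mul, sub_zero] at hFTC
  · exact inv_eq_of_mul_eq_one_right (by linear_combination hFTC)
  · intro t ht
    have : t - l ≤ 0 := by simpa using ht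
    simp [max_eq_right this, Real.zero_rpow hp.ne']

lemma norm_sum_inv_sub_sub_le {ι κ : Type*} [Fintype ι] [Fintype κ] (hp : 0 < p)
    (hz : 0 < z.im) {a : ι → ℝ} {b : κ → ℝ} {R : ℝ}
    (hR : ∀ t, |∑ i, max (t - a i) 0 ^ p - ∑ j, max (t - b j) 0 ^ p| ≤ R) :
    ‖∑ i, (z - a i)⁻¹ - ∑ j, (z - b j)⁻¹‖ ≤ Cp p / z.im ^ (p + 1) * R := by
  have hintegrable := integrable_max_sub_rpow_mul_stieltjesKernel hp.le hz
  have hsum : ∑ i, (z - a i)⁻¹ - ∑ j, (z - b j)⁻¹ = -(p + 1) * ∫ t,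
      ((∑ i, max (t - a i) 0 ^ p - ∑ j, max (t - b j) 0 ^ p : ℝ) : ℂ) * stieltjesKernel p z t := by
    simp only [inv_sub_eq_integral_stieltjesKernel hp hz, ← Finset.mul_sum, ← mul_sub]
    rw [← integral_finsetSum _ fun i _ => hintegrable _,
      ← integral_finsetSum _ fun i _ => hintegrable _,
      ← integral_sub (integrable_finsetSum _ fun i _ => hintegrable _)
        (integrable_finsetSum _ fun i _ => hintegrable _)]
    simp only [Complex.ofReal_sub, Complex.ofReal_sum, sub_mul, Finset.sum_mul]
  have hK : Integrable fun t => ‖stieltjesKernel p z t‖ := by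
    simp only [norm_stieltjesKernel]
    exact integrable_norm_ofReal_sub_rpow_neg (by linarith) hz
  have hp_norm : ‖-((p : ℂ) + 1)‖ = p + 1 := by
    rw [norm_neg, ← Complex.ofReal_one, ← Complex.ofReal_add, Complex.norm_real,
      Real.norm_of_nonneg (by linarith)]
  rw [hsum, norm_mul, hp_norm, ← integral_norm_stieltjesKernel (by linarith) hz, mul_assoc,
    ← integral_mul_const]
  refine mul_le_mul_of_nonneg_left (norm_integral_le_of_norm_le (hK.mul_const R)
    (ae_of_all _ fun t => ?_)) (by linarith)
  rw [norm_mul, Complex.norm_real, mul_comm]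
  exact mul_le_mul_of_nonneg_left (hR t) (norm_nonneg _)

end StieltjesKernel

section SpectralVariation

variable {n : ℕ} {p : ℝ}

lemma sum_eigs (f : ℝ → ℝ) (A : HermMat 𝕜 n) :
    ∑ i, f (eigs A i) = cfcTrace f (A : Matrix (Fin n) (Fin n) 𝕜) :=
  (cfcTrace_eq_sum_eigenvalues f (herm_isHermitian A)).symm

lemma abs_sum_max_sub_eigs_rpow_sub_le (hp₀ : 0 < p) (hp₁ : p ≤ 1) (A B : HermMat 𝕜 n) (t : ℝ) :
    |∑ i, max (t - eigs A i) 0 ^ p - ∑ i, max (t - eigs B i) 0 ^ p| ≤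
      ∑ i, |eigs (A - B) i| ^ p := by
  rw [sum_eigs (fun x => max (t - x) 0 ^ p), sum_eigs (fun x => max (t - x) 0 ^ p),
    sum_eigs (|·| ^ p)]
  exact abs_cfcTrace_max_sub_rpow_sub_le hp₀ hp₁ t A.2 B.2

lemma sum_abs_eigs_rpow_le_matLpNormPow (hp₀ : 0 < p) (hp₂ : p ≤ 2) (A : HermMat 𝕜 n) :
    ∑ i, |eigs A i| ^ p ≤ matLpNormPow p A :=
  (sum_eigs (|·| ^ p) A).trans_le (cfcTrace_abs_rpow_le hp₀ hp₂ A.2)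

lemma stieltjesT_specMeasure (A : HermMat 𝕜 n) (z : ℂ) :
    stieltjesT (specMeasure A) z = (n : ℂ)⁻¹ * ∑ i, (z - eigs A i)⁻¹ := by
  rw [stieltjesT, specMeasure, integral_smul_measure,
    integral_finsetSum_measure fun i _ => integrable_dirac (by simp)]
  simp

lemma matLpNormPow_nonneg (p : ℝ) (A : HermMat 𝕜 n) : 0 ≤ matLpNormPow p A :=
  Finset.sum_nonneg fun _ _ => Finset.sum_nonneg fun _ _ => Real.rpow_nonneg (norm_nonneg _) _

lemma Cp_pos (hp : -1 < p) : 0 < Cp p := by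
  have hp' : 0 < p + 1 := by linarith
  have := Real.Gamma_pos_of_pos (half_pos hp')
  have := Real.Gamma_pos_of_pos (show 0 < 1 + p / 2 by linarith)
  unfold Cp
  positivity

theorem spectral_variation_p_lt_one_general (hp₀ : 0 < p) (hp₁ : p ≤ 1) (A B : HermMat 𝕜 n) :
    (∀ t : ℝ,
      |(∑ i, max (t - eigs A i) 0 ^ p) - ∑ i, max (t - eigs B i) 0 ^ p| ≤
        ∑ i, |eigs (A - B) i| ^ p) ∧
    (∀ z : ℂ, 0 < z.im →
      ‖stieltjesT (specMeasure A) z - stieltjesT (specMeasure B) z‖ ≤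
        Cp p / z.im ^ (p + 1) / n * matLpNormPow p (A - B)) := by
  have rotfeld := abs_sum_max_sub_eigs_rpow_sub_le hp₀ hp₁ A B
  refine ⟨rotfeld, fun z hz => ?_⟩
  have hCp := Cp_pos (show -1 < p by linarith)
  calc ‖stieltjesT (specMeasure A) z - stieltjesT (specMeasure B) z‖
      = (n : ℝ)⁻¹ * ‖∑ i, (z - eigs A i)⁻¹ - ∑ i, (z - eigs B i)⁻¹‖ := by
        rw [stieltjesT_specMeasure, stieltjesT_specMeasure, ← mul_sub, norm_mul, norm_inv,
          Complex.norm_natCast]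
    _ ≤ (n : ℝ)⁻¹ * (Cp p / z.im ^ (p + 1) * ∑ i, |eigs (A - B) i| ^ p) := by
        gcongr
        exact norm_sum_inv_sub_sub_le hp₀ hz rotfeld
    _ ≤ (n : ℝ)⁻¹ * (Cp p / z.im ^ (p + 1) * matLpNormPow p (A - B)) := by
        gcongr
        exact sum_abs_eigs_rpow_le_matLpNormPow hp₀ (by linarith) (A - B)
    _ = Cp p / z.im ^ (p + 1) / n * matLpNormPow p (A - B) := by ring

end SpectralVariation

/-- Lemma (spectral variation inequalities for `p ∈ (0,1)`: Rotfel'd-type bound and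
Stieltjes-transform distance bound). -/
theorem spectral_variation_p_lt_one
    (p : ℝ) (hp0 : 0 < p) (hp1 : p < 1) (n : ℕ) (A B : HermMat 𝕜 n) :
    -- Rotfel'd-type inequality
    (∀ t : ℝ,
      |(∑ i, max (t - eigs A i) 0 ^ p) - ∑ i, max (t - eigs B i) 0 ^ p| ≤
        ∑ i, |eigs (A - B) i| ^ p) ∧
    -- Stieltjes-transform distance bound
    (∀ z : ℂ, 2 ≤ z.im →
      ‖stieltjesT (specMeasure A) z - stieltjesT (specMeasure B) z‖ ≤
        (Cp p / n) * matLpNormPow p (A - B)) := by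
  obtain ⟨rotfeld, stieltjes⟩ := spectral_variation_p_lt_one_general hp0 hp1.le A B
  refine ⟨rotfeld, fun z hz => (stieltjes z (by linarith)).trans ?_⟩
  gcongr ?_ / _ * _
  · exact matLpNormPow_nonneg p (A - B)
  · exact div_le_self (Cp_pos (by linarith)).le (Real.one_le_rpow (by linarith) (by linarith))

end
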